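/- arXiv:2107.03805 — 2 statements merged into one kernel-verified Lean document; each statement's English description precedes it below -/
import Mathlib

section
/- (Pentadiagonal case: the Szegő function is a quadratic polynomial.) Let q₁, q₂ ∈ ℂ and let φ(t) = 1 + 2 Re(q₁ e^{2πit}) + 2 Re(q₂ e^{4πit}) for t ∈ [0,1]. Assume φ(t) > 0 for all t ∈ [0,1]. Set c₀ = exp((1/2)∫₀¹ log φ(t) dt) and assume c₀⁴ ≠ |q₂|². Then for all |z| < 1, exp((1/2)∫₀¹ ((e^{2πit}+z)/(e^{2πit}−z)) log φ(t) dt) = c₀ + c₁ z + c₂ z², where c₁ = c₀ (c₀² q₁ − q₂ conj(q₁)) / (c₀⁴ − |q₂|²) and c₂ = q₂ / c₀. -/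
open MeasureTheory Complex Filter ComplexConjugate

/-- The point `e^{2πit}` on the unit circle. -/
noncomputable def circlePt (t : ℝ) : ℂ := Complex.exp (((2 * Real.pi * t : ℝ) : ℂ) * Complex.I)

/-- The inverse Szegő function `ψ(z) = exp(-(1/2)∫₀¹ ((e^{2πit}+z)/(e^{2πit}-z)) log φ(t) dt)`. -/
noncomputable def szegoPsi (φ : ℝ → ℝ) (z : ℂ) : ℂ :=
  Complex.exp (-(1/2 : ℂ) * ∫ t in (0:ℝ)..1,
    ((circlePt t + z) / (circlePt t - z)) * (Real.log (φ t) : ℂ))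

/-- Fourier coefficients of the weight: `γ(k) = ∫₀¹ e^{2πikt} φ(t) dt`. -/
noncomputable def toeplitzCoeff (φ : ℝ → ℝ) (k : ℤ) : ℂ :=
  ∫ t in (0:ℝ)..1, Complex.exp (((2 * Real.pi * (k : ℝ) * t : ℝ) : ℂ) * Complex.I) * (φ t : ℂ)

/-! For a polynomial `P` put `P⋆(w) = wⁿ conj P(1 / conj w)`, so that `|P(w)|² = P(w) P⋆(w) / wⁿ` on
the unit circle. A Laurent polynomial `Q(w) / wⁿ` that is positive on the circle satisfies `Q⋆ = Q`,
so its zeros come in pairs `a`, `1 / conj a`; splitting off one pair after another gives the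
Fejér–Riesz factorization `Q = P P⋆` with `P` zero-free in the closed disc and `P(0) > 0`.

If `F` is holomorphic and zero-free on the closed disc, the Poisson formula for the harmonic
function `log |F|` shows that the Szegő function of `|F|²` has the same modulus as `F` inside the
disc, so the two agree up to a unimodular constant, which is `1` when `F(0) > 0`. Hence the Szegő
function of a positive trigonometric polynomial is its Fejér–Riesz factor `P`, and the coefficients
of `P` are read off from `Q = P P⋆`. -/

section Circle

theorem circlePt_eq_circleMap (t : ℝ) : circlePt t = circleMap 0 1 (2 * Real.pi * t) := by
  simp [circlePt, circleMap]

theorem norm_circlePt (t : ℝ) : ‖circlePt t‖ = 1 := Complex.norm_exp_ofReal_mul_I _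

theorem periodic_circlePt : Function.Periodic circlePt 1 := fun t => by
  rw [circlePt_eq_circleMap, mul_add, mul_one, periodic_circleMap, ← circlePt_eq_circleMap]

theorem exists_mem_Ico_circlePt_eq {w : ℂ} (hw : ‖w‖ = 1) :
    ∃ t ∈ Set.Ico (0 : ℝ) 1, circlePt t = w := by
  obtain ⟨θ, rfl⟩ := (Complex.norm_eq_one_iff w).1 hw
  obtain ⟨t, ht, hθt⟩ := periodic_circlePt.exists_mem_Ico₀ one_pos (θ / (2 * Real.pi))
  refine ⟨t, ht, ?_⟩
  rw [← hθt, circlePt, mul_div_cancel₀ _ Real.two_pi_pos.ne']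

theorem intervalIntegral_comp_circlePt {E : Type*} [NormedAddCommGroup E] [NormedSpace ℝ E]
    (g : ℂ → E) : ∫ t in (0 : ℝ)..1, g (circlePt t) = Real.circleAverage g 0 1 := by
  simp only [circlePt_eq_circleMap]
  rw [intervalIntegral.integral_comp_mul_left (fun θ => g (circleMap 0 1 θ)) Real.two_pi_pos.ne',
    mul_zero, mul_one, Real.circleAverage_def]

end Circle

section OuterFunction

open Metric
open scoped ComplexOrder

variable {F : ℂ → ℂ} {R : ℝ} {w : ℂ}

theorem circleIntegrable_log_norm_of_analyticOnNhd (hF : AnalyticOnNhd ℂ F (closedBall 0 R))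
    (hR : 0 ≤ R) : CircleIntegrable (fun ζ => Real.log ‖F ζ‖) 0 R :=
  MeromorphicOn.circleIntegrable_log_norm_of_nonneg
    (fun z hz => (hF z (sphere_subset_closedBall hz)).meromorphicAt) hR

theorem circleAverage_herglotzRieszKernel_center {c : ℂ} {g : ℂ → ℝ} (hg : CircleIntegrable g c R)
    (hR : R ≠ 0) :
    Real.circleAverage (fun ζ => herglotzRieszKernel c c ζ * (g ζ : ℂ)) c R =
      ((Real.circleAverage g c R : ℝ) : ℂ) := by
  rw [← Complex.ofRealCLM_apply, ← Complex.ofRealCLM.circleAverage_comp_comm hg]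
  refine Real.circleAverage_congr_sphere fun ζ hζ => ?_
  have hζc : ζ - c ≠ 0 := by
    intro h
    rw [sub_eq_zero.1 h, mem_sphere, dist_self] at hζ
    exact hR (abs_eq_zero.1 hζ.symm)
  simp [herglotzRieszKernel_def, hζc]

theorem re_circleAverage_herglotzRieszKernel_mul_log_norm
    (hF : AnalyticOnNhd ℂ F (closedBall 0 R)) (hne : ∀ z ∈ closedBall 0 R, F z ≠ 0)
    (hw : w ∈ ball 0 R) :
    (Real.circleAverage (fun ζ => herglotzRieszKernel 0 w ζ * (Real.log ‖F ζ‖ : ℂ)) 0 R).re =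
      Real.log ‖F w‖ := by
  have hharm : InnerProductSpace.HarmonicOnNhd (fun ζ => Real.log ‖F ζ‖) (closedBall 0 R) :=
    fun z hz => (hF z hz).harmonicAt_log_norm (hne z hz)
  have hint : CircleIntegrable (fun ζ => Real.log ‖F ζ‖) 0 R :=
    circleIntegrable_log_norm_of_analyticOnNhd hF (pos_of_mem_ball hw).le
  exact (re_circleAverage_herglotzRieszKernel_smul hint hw).trans
    (hharm.circleAverage_re_herglotzRieszKernel_smul hw)

theorem circleAverage_herglotzRieszKernel_center_mul_log_norm
    (hF : AnalyticOnNhd ℂ F (closedBall 0 R)) (hne : ∀ z ∈ closedBall 0 R, F z ≠ 0) (hR : 0 < R) :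
    Real.circleAverage (fun ζ => herglotzRieszKernel 0 0 ζ * (Real.log ‖F ζ‖ : ℂ)) 0 R =
      (Real.log ‖F 0‖ : ℂ) := by
  have hint : CircleIntegrable (fun ζ => Real.log ‖F ζ‖) 0 R :=
    circleIntegrable_log_norm_of_analyticOnNhd hF hR.le
  rw [← re_circleAverage_herglotzRieszKernel_mul_log_norm hF hne (mem_ball_self hR),
    circleAverage_herglotzRieszKernel_center hint hR.ne', Complex.ofReal_re]

theorem exp_circleAverage_herglotzRieszKernel_mul_log_norm
    (hF : AnalyticOnNhd ℂ F (closedBall 0 R)) (hne : ∀ z ∈ closedBall 0 R, F z ≠ 0)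
    (hF₀ : 0 ≤ F 0) (hw : w ∈ ball 0 R) :
    Complex.exp
        (Real.circleAverage (fun ζ => herglotzRieszKernel 0 w ζ * (Real.log ‖F ζ‖ : ℂ)) 0 R) =
      F w := by
  set G : ℂ → ℂ := fun w =>
    Real.circleAverage (fun ζ => herglotzRieszKernel 0 w ζ * (Real.log ‖F ζ‖ : ℂ)) 0 R with hG
  have hR : 0 < R := pos_of_mem_ball hw
  have h₀ : (0 : ℂ) ∈ ball 0 R := mem_ball_self hR
  have hne' : ∀ z ∈ ball 0 R, F z ≠ 0 := fun z hz => hne z (ball_subset_closedBall hz)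
  have hint : CircleIntegrable (fun ζ => Real.log ‖F ζ‖) 0 R :=
    circleIntegrable_log_norm_of_analyticOnNhd hF hR.le
  have hintC : CircleIntegrable (fun ζ => (Real.log ‖F ζ‖ : ℂ)) 0 R := by
    simp only [CircleIntegrable, intervalIntegrable_iff] at hint ⊢
    exact Complex.ofRealCLM.integrable_comp hint
  have hre : ∀ z ∈ ball 0 R, (G z).re = Real.log ‖F z‖ := fun z hz =>
    re_circleAverage_herglotzRieszKernel_mul_log_norm hF hne hz
  have hnorm : ∀ z ∈ ball 0 R, ‖Complex.exp (G z) / F z‖ = 1 := fun z hz => by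
    have hz₀ := norm_pos_iff.2 (hne' z hz)
    rw [norm_div, Complex.norm_exp, hre z hz, Real.exp_log hz₀, div_self hz₀.ne']
  have hdiff : DifferentiableOn ℂ (fun z => Complex.exp (G z) / F z) (ball 0 R) :=
    (differentiableOn_circleAverage_herglotzRieszKernel_smul
      (f := fun ζ => (Real.log ‖F ζ‖ : ℂ)) hintC).cexp.div
        (hF.differentiableOn.mono ball_subset_closedBall) hne'
  have hcenter : Complex.exp (G 0) = F 0 := by
    simp only [hG]
    rw [circleAverage_herglotzRieszKernel_center_mul_log_norm hF hne hR, ← Complex.ofReal_exp,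
      Real.exp_log (norm_pos_iff.2 (hne' 0 h₀)), ← Complex.eq_coe_norm_of_nonneg hF₀]
  have hconst := Complex.eqOn_of_isPreconnected_of_isMaxOn_norm
    (convex_ball (0 : ℂ) R).isPreconnected isOpen_ball hdiff h₀
    (fun z hz => ((hnorm z hz).trans (hnorm 0 h₀).symm).le) hw
  rwa [Function.const_apply, hcenter, div_self (hne' 0 h₀), div_eq_one_iff_eq (hne' w hw)] at hconst

end OuterFunction

section SzegoFunction

open Metric
open scoped ComplexOrder

/-- The Szegő function `exp((1/2)∫₀¹ ((e^{2πit}+z)/(e^{2πit}-z)) log φ(t) dt)` of a weight `φ` on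
`[0, 1]`, the reciprocal of `szegoPsi`. It is meaningful for `‖z‖ < 1` and `log φ` integrable. -/
noncomputable def szegoFunction (φ : ℝ → ℝ) (z : ℂ) : ℂ :=
  Complex.exp ((1/2 : ℂ) * ∫ t in (0:ℝ)..1,
    ((circlePt t + z) / (circlePt t - z)) * (Real.log (φ t) : ℂ))

theorem szegoFunction_zero (φ : ℝ → ℝ) :
    szegoFunction φ 0 = (Real.exp ((1/2) * ∫ t in (0:ℝ)..1, Real.log (φ t)) : ℂ) := by
  have hne (t : ℝ) : circlePt t ≠ 0 := Complex.exp_ne_zero _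
  simp [szegoFunction, hne, intervalIntegral.integral_ofReal]

theorem szegoFunction_norm_sq_comp_circlePt {F : ℂ → ℂ} {φ : ℝ → ℝ} {z : ℂ}
    (hF : AnalyticOnNhd ℂ F (closedBall 0 1)) (hne : ∀ w ∈ closedBall 0 1, F w ≠ 0)
    (hF₀ : 0 ≤ F 0) (hφ : ∀ t, φ t = ‖F (circlePt t)‖ ^ 2) (hz : ‖z‖ < 1) :
    szegoFunction φ z = F z := by
  rw [← exp_circleAverage_herglotzRieszKernel_mul_log_norm hF hne hF₀ (mem_ball_zero_iff.2 hz),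
    ← intervalIntegral_comp_circlePt, szegoFunction, ← intervalIntegral.integral_const_mul]
  congr 1
  refine intervalIntegral.integral_congr fun t _ => ?_
  simp only [hφ, Real.log_pow, herglotzRieszKernel_def, sub_zero]
  push_cast
  ring

end SzegoFunction

section ConjReflect

open Polynomial

/-- The reciprocal polynomial `P⋆(w) = wⁿ conj P(1 / conj w)` of a polynomial `P` of degree at most
`n`, which agrees with `wⁿ conj P(w)` on the unit circle. -/
noncomputable def conjReflect (n : ℕ) (P : ℂ[X]) : ℂ[X] := (P.map (starRingEnd ℂ)).reflect n

variable {m n : ℕ} {P Q : ℂ[X]} {w : ℂ}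

theorem coeff_conjReflect_of_le {k : ℕ} (hk : k ≤ n) :
    (conjReflect n P).coeff k = conj (P.coeff (n - k)) := by
  rw [conjReflect, coeff_reflect, revAt_le hk, coeff_map]

theorem natDegree_conjReflect_le (hP : P.natDegree ≤ n) : (conjReflect n P).natDegree ≤ n :=
  natDegree_reflect_le.trans (max_le le_rfl (natDegree_map_le.trans hP))

theorem conjReflect_mul (hP : P.natDegree ≤ m) (hQ : Q.natDegree ≤ n) :
    conjReflect (m + n) (P * Q) = conjReflect m P * conjReflect n Q := by
  rw [conjReflect, Polynomial.map_mul,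
    reflect_mul _ _ (natDegree_map_le.trans hP) (natDegree_map_le.trans hQ)]
  rfl

theorem eval_conjReflect (hP : P.natDegree ≤ n) (hw : w ≠ 0) :
    (conjReflect n P).eval w = w ^ n * conj (P.eval (conj w)⁻¹) := by
  have hconj : w⁻¹ = conj (conj w)⁻¹ := by rw [map_inv₀, Complex.conj_conj]
  let := invertibleOfNonzero (inv_ne_zero hw)
  have h := eval₂_reflect_mul_pow (RingHom.id ℂ) w⁻¹ n (P.map (starRingEnd ℂ))
    (natDegree_map_le.trans hP)
  simp only [invOf_eq_inv, inv_inv, inv_pow] at h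
  rw [← div_eq_mul_inv, div_eq_iff (pow_ne_zero n hw)] at h
  rw [conjReflect, eval, h, ← eval, hconj, eval_map, eval₂_at_apply, mul_comm]

theorem eval_conjReflect_of_norm_eq_one (hP : P.natDegree ≤ n) (hw : ‖w‖ = 1) :
    (conjReflect n P).eval w = w ^ n * conj (P.eval w) := by
  have hw₀ : w ≠ 0 := norm_ne_zero_iff.1 (hw ▸ one_ne_zero)
  rw [eval_conjReflect hP hw₀, ← Complex.inv_eq_conj hw, inv_inv]

theorem eval_mul_conjReflect_of_norm_eq_one (hP : P.natDegree ≤ n) (hw : ‖w‖ = 1) :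
    (P * conjReflect n P).eval w = w ^ n * (‖P.eval w‖ : ℂ) ^ 2 := by
  rw [eval_mul, eval_conjReflect_of_norm_eq_one hP hw, ← Complex.mul_conj']
  ring

theorem polynomial_eq_of_eval_eq_of_norm_eq_one (h : ∀ w : ℂ, ‖w‖ = 1 → P.eval w = Q.eval w) :
    P = Q := by
  have hinf : (Metric.sphere (0 : ℂ) 1).Infinite :=
    (isPreconnected_sphere (by simp) 0 1).infinite_of_nontrivial
      ⟨1, by simp, -1, by simp, by norm_num⟩
  exact eq_of_infinite_eval_eq P Q (hinf.mono fun w hw => h w (mem_sphere_zero_iff_norm.1 hw))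

theorem exists_root_norm_lt_one_of_conjReflect_eq (hn : n ≠ 0) (hQ : Q.natDegree ≤ n)
    (hself : conjReflect n Q = Q) (hcirc : ∀ w : ℂ, ‖w‖ = 1 → Q.eval w ≠ 0) :
    ∃ a : ℂ, ‖a‖ < 1 ∧ Q.IsRoot a := by
  by_cases hQ₀ : Q.IsRoot 0
  · exact ⟨0, by simp, hQ₀⟩
  have hcoeff : Q.coeff n ≠ 0 := by
    rw [← hself, coeff_conjReflect_of_le le_rfl, Nat.sub_self, _root_.map_ne_zero,
      coeff_zero_eq_eval_zero]
    exact hQ₀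
  have hdeg : Q.natDegree = n := hQ.antisymm (le_natDegree_of_ne_zero hcoeff)
  obtain ⟨r, hr⟩ := IsAlgClosed.exists_root Q (degree_ne_of_natDegree_ne (hdeg ▸ hn))
  rcases lt_trichotomy ‖r‖ 1 with hlt | heq | hgt
  · exact ⟨r, hlt, hr⟩
  · exact absurd hr (hcirc r heq)
  · have hr₀ : (conj r)⁻¹ ≠ 0 :=
      inv_ne_zero ((_root_.map_ne_zero _).2 (norm_pos_iff.1 (one_pos.trans hgt)))
    refine ⟨(conj r)⁻¹, ?_, ?_⟩
    · rw [norm_inv, RCLike.norm_conj]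
      exact inv_lt_one_of_one_lt₀ hgt
    · rw [IsRoot, ← hself, eval_conjReflect hQ hr₀]
      simp [hr.eq_zero]

theorem conjReflect_one_one_sub_C_mul_X (a : ℂ) :
    conjReflect 1 (1 - C a * X) = X - C (conj a) := by
  simp [conjReflect, reflect_sub]

theorem conjReflect_one_X_sub_C (a : ℂ) :
    conjReflect 1 (X - C a) = 1 - C (conj a) * X := by
  simp [conjReflect, reflect_sub]

theorem one_sub_C_mul_X_ne_zero (a : ℂ) : (1 - C a * X : ℂ[X]) ≠ 0 := fun h => by
  simpa using congrArg (eval 0) h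

theorem isCoprime_X_sub_C_one_sub_C_conj_mul_X {a : ℂ} (ha : ‖a‖ ≠ 1) :
    IsCoprime (X - C a) (1 - C (conj a) * X) := by
  rw [(irreducible_X_sub_C a).coprime_iff_not_dvd, dvd_iff_isRoot]
  intro h
  have hsq : (‖a‖ : ℂ) ^ 2 = 1 := by
    rw [← Complex.conj_mul']
    exact (sub_eq_zero.1 (by simpa using h.eq_zero)).symm
  exact ha ((pow_eq_one_iff_of_nonneg (norm_nonneg a) two_ne_zero).1 (by exact_mod_cast hsq))

theorem exists_eq_X_sub_C_mul_one_sub_C_conj_mul_X_mul {a : ℂ} (hQ : Q.natDegree ≤ n + 2)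
    (hself : conjReflect (n + 2) Q = Q) (ha : ‖a‖ ≠ 1) (hroot : Q.IsRoot a) :
    ∃ Q' : ℂ[X], Q'.natDegree ≤ n ∧ Q = (X - C a) * (1 - C (conj a) * X) * Q' := by
  obtain ⟨S, rfl⟩ := dvd_iff_isRoot.2 hroot
  have hS : S.natDegree ≤ n + 1 := by
    rcases eq_or_ne S 0 with rfl | hS₀
    · simp
    · rw [natDegree_mul (X_sub_C_ne_zero a) hS₀, natDegree_X_sub_C] at hQ
      lia
  -- Dividing by `1 - conj a X` rather than by `X - 1 / conj a` covers `a = 0`, whose paired zero is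
  -- at infinity.
  have hrefl : (1 - C (conj a) * X) * conjReflect (n + 1) S = (X - C a) * S := by
    rw [← conjReflect_one_X_sub_C, ← conjReflect_mul (natDegree_X_sub_C_le a) hS, add_comm 1,
      hself]
  obtain ⟨Q', rfl⟩ := (isCoprime_X_sub_C_one_sub_C_conj_mul_X ha).symm.dvd_of_dvd_mul_left
    (Dvd.intro _ hrefl)
  refine ⟨Q', ?_, by ring⟩
  have hrefl' : conjReflect (n + 1) ((1 - C (conj a) * X) * Q') = (X - C a) * Q' := by
    refine mul_left_cancel₀ (one_sub_C_mul_X_ne_zero _) (hrefl.trans ?_)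
    ring
  rcases eq_or_ne Q' 0 with rfl | hQ'
  · simp
  have hdeg := hrefl' ▸ natDegree_conjReflect_le hS
  rw [natDegree_mul (X_sub_C_ne_zero a) hQ', natDegree_X_sub_C] at hdeg
  lia

end ConjReflect

section FejerRiesz

open Polynomial
open scoped ComplexOrder

/-- `Q(w) / wⁿ` is a trigonometric polynomial of degree at most `n` that is positive on the unit
circle; multiplying by `wⁿ` lets it be handled as an ordinary polynomial `Q`. -/
structure IsPositiveSymbol (n : ℕ) (Q : ℂ[X]) : Prop where
  natDegree_le : Q.natDegree ≤ 2 * n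
  pos : ∀ w : ℂ, ‖w‖ = 1 → 0 < Q.eval w / w ^ n

namespace IsPositiveSymbol

variable {n : ℕ} {Q : ℂ[X]}

theorem eval_ne_zero (hQ : IsPositiveSymbol n Q) {w : ℂ} (hw : ‖w‖ = 1) : Q.eval w ≠ 0 :=
  fun h => by simpa [h] using hQ.pos w hw

theorem conjReflect_eq (hQ : IsPositiveSymbol n Q) : conjReflect (2 * n) Q = Q := by
  refine polynomial_eq_of_eval_eq_of_norm_eq_one fun w hw => ?_
  have hwn : w ^ n ≠ 0 := pow_ne_zero n (norm_ne_zero_iff.1 (hw ▸ one_ne_zero))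
  have hconj : conj (w ^ n) = (w ^ n)⁻¹ := by rw [Complex.inv_eq_conj (by simp [hw])]
  have hreal : conj (Q.eval w / w ^ n) = Q.eval w / w ^ n :=
    Complex.conj_eq_iff_im.2 (Complex.pos_iff.1 (hQ.pos w hw)).2.symm
  rw [map_div₀, hconj, div_inv_eq_mul, eq_div_iff hwn] at hreal
  rw [eval_conjReflect_of_norm_eq_one hQ.natDegree_le hw, mul_comm, two_mul, pow_add, ← mul_assoc,
    hreal]

theorem exists_eq_mul_conjReflect_mul (hQ : IsPositiveSymbol (n + 1) Q) :
    ∃ (a : ℂ) (Q' : ℂ[X]), ‖a‖ < 1 ∧ IsPositiveSymbol n Q' ∧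
      Q = (1 - C a * X) * conjReflect 1 (1 - C a * X) * Q' := by
  obtain ⟨a, ha, hroot⟩ := exists_root_norm_lt_one_of_conjReflect_eq (by lia) hQ.natDegree_le
    hQ.conjReflect_eq fun w hw => hQ.eval_ne_zero hw
  obtain ⟨Q', hdeg, rfl⟩ := exists_eq_X_sub_C_mul_one_sub_C_conj_mul_X_mul (n := 2 * n)
    hQ.natDegree_le hQ.conjReflect_eq ha.ne hroot
  have hB : (1 - C (conj a) * X : ℂ[X]).natDegree ≤ 1 := by compute_degree
  have hBB : (X - C a) * (1 - C (conj a) * X) =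
      (1 - C (conj a) * X) * conjReflect 1 (1 - C (conj a) * X) := by
    rw [conjReflect_one_one_sub_C_mul_X, Complex.conj_conj, mul_comm]
  rw [hBB] at hQ ⊢
  refine ⟨conj a, Q', by simpa using ha, ⟨hdeg, fun w hw => ?_⟩, rfl⟩
  have hpos := hQ.pos w hw
  have hnorm : 0 ≤ (‖(1 - C (conj a) * X : ℂ[X]).eval w‖ : ℂ) ^ 2 := by positivity
  have hw₀ : w ≠ 0 := norm_ne_zero_iff.1 (hw ▸ one_ne_zero)
  rw [eval_mul, eval_mul_conjReflect_of_norm_eq_one hB hw, pow_one, mul_assoc,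
    pow_succ' w n, mul_div_mul_left _ _ hw₀, mul_div_assoc] at hpos
  exact pos_of_mul_pos_right hpos hnorm

theorem exists_eq_mul_conjReflect (hQ : IsPositiveSymbol n Q) :
    ∃ P : ℂ[X], P.natDegree ≤ n ∧ 0 < P.coeff 0 ∧ (∀ z : ℂ, ‖z‖ ≤ 1 → P.eval z ≠ 0) ∧
      Q = P * conjReflect n P := by
  induction n generalizing Q with
  | zero =>
    obtain ⟨c, rfl⟩ := natDegree_eq_zero.1 (Nat.le_zero.1 hQ.natDegree_le)
    have hc : 0 < c := by simpa using hQ.pos 1 norm_one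
    have hc_norm := norm_pos_iff.2 hc.ne'
    have hsqrt : (√‖c‖ : ℂ) ≠ 0 := by exact_mod_cast (Real.sqrt_pos.2 hc_norm).ne'
    refine ⟨C (√‖c‖ : ℂ), (natDegree_C _).le, ?_, fun z _ => by simpa using hsqrt, ?_⟩
    · simpa using hc.ne'
    · simp only [conjReflect, Polynomial.map_C, reflect_C, Complex.conj_ofReal, pow_zero, mul_one]
      rw [← C_mul, ← Complex.ofReal_mul, Real.mul_self_sqrt hc_norm.le,
        ← Complex.eq_coe_norm_of_nonneg hc.le]
  | succ n ih =>
    obtain ⟨a, Q', ha, hQ', rfl⟩ := hQ.exists_eq_mul_conjReflect_mul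
    obtain ⟨P, hdeg, hP₀, hne, rfl⟩ := ih hQ'
    have hB : (1 - C a * X : ℂ[X]).natDegree ≤ 1 := by compute_degree
    refine ⟨P * (1 - C a * X), natDegree_mul_le_of_le hdeg hB, by simpa [mul_coeff_zero] using hP₀,
      fun z hz => ?_, ?_⟩
    · rw [eval_mul]
      refine mul_ne_zero (hne z hz) ?_
      have haz : ‖a * z‖ < 1 := by
        rw [norm_mul]
        nlinarith [norm_nonneg a]
      refine fun h => haz.ne ?_
      rw [← sub_eq_zero.1 (show 1 - a * z = 0 by simpa using h), norm_one]
    · rw [conjReflect_mul hdeg hB]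
      ring

theorem exists_szegoFunction_eq_eval (hQ : IsPositiveSymbol n Q) {φ : ℝ → ℝ}
    (hφ : ∀ t, (φ t : ℂ) = Q.eval (circlePt t) / circlePt t ^ n) :
    ∃ P : ℂ[X], P.natDegree ≤ n ∧ Q = P * conjReflect n P ∧
      ∀ z : ℂ, ‖z‖ < 1 → szegoFunction φ z = P.eval z := by
  obtain ⟨P, hdeg, hP₀, hne, rfl⟩ := hQ.exists_eq_mul_conjReflect
  refine ⟨P, hdeg, rfl, fun z hz => ?_⟩
  refine szegoFunction_norm_sq_comp_circlePt (F := fun w => P.eval w)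
    (fun w _ => AnalyticOnNhd.eval_polynomial P w (Set.mem_univ w))
    (fun w hw => hne w (mem_closedBall_zero_iff.1 hw))
    (by simpa only [coeff_zero_eq_eval_zero] using hP₀.le) (fun t => ?_) hz
  have hpt : circlePt t ^ n ≠ 0 := pow_ne_zero n (Complex.exp_ne_zero _)
  have hφt := hφ t
  rw [eval_mul_conjReflect_of_norm_eq_one hdeg (norm_circlePt t), mul_div_cancel_left₀ _ hpt] at hφt
  exact_mod_cast hφt

end IsPositiveSymbol

end FejerRiesz

section Pentadiagonal

open Polynomial
open scoped ComplexOrder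

/-- The polynomial `w² φ` for `φ(w) = 1 + 2 Re(q₁ w) + 2 Re(q₂ w²)` on the unit circle, where
`conj w = w⁻¹`. -/
noncomputable def pentadiagonalSymbol (q₁ q₂ : ℂ) : ℂ[X] :=
  C (conj q₂) + C (conj q₁) * X + X ^ 2 + C q₁ * X ^ 3 + C q₂ * X ^ 4

variable {q₁ q₂ : ℂ}

theorem eval_pentadiagonalSymbol_div_sq {w : ℂ} (hw : ‖w‖ = 1) :
    (pentadiagonalSymbol q₁ q₂).eval w / w ^ 2 =
      ((1 + 2 * (q₁ * w).re + 2 * (q₂ * w ^ 2).re : ℝ) : ℂ) := by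
  have hw₀ : w ≠ 0 := norm_ne_zero_iff.1 (hw ▸ one_ne_zero)
  have hre (u : ℂ) : ((2 * u.re : ℝ) : ℂ) = u + conj u := (Complex.add_conj u).symm
  rw [Complex.ofReal_add, Complex.ofReal_add, hre, hre]
  simp only [pentadiagonalSymbol, eval_add, eval_mul, eval_pow, eval_X, eval_C, map_mul, map_pow,
    ← Complex.inv_eq_conj hw, Complex.ofReal_one]
  field_simp
  ring

theorem isPositiveSymbol_pentadiagonalSymbol
    (hpos : ∀ w : ℂ, ‖w‖ = 1 → 0 < 1 + 2 * (q₁ * w).re + 2 * (q₂ * w ^ 2).re) :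
    IsPositiveSymbol 2 (pentadiagonalSymbol q₁ q₂) where
  natDegree_le := by
    unfold pentadiagonalSymbol
    compute_degree
  pos w hw := by
    rw [eval_pentadiagonalSymbol_div_sq hw]
    exact_mod_cast hpos w hw

theorem coeff_of_pentadiagonalSymbol_eq {P : ℂ[X]} (hdeg : P.natDegree ≤ 2)
    (hP : pentadiagonalSymbol q₁ q₂ = P * conjReflect 2 P) :
    q₁ = P.coeff 1 * conj (P.coeff 0) + P.coeff 2 * conj (P.coeff 1) ∧
      q₂ = P.coeff 2 * conj (P.coeff 0) := by
  have hP_zero {k : ℕ} (hk : 2 < k) : P.coeff k = 0 :=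
    coeff_eq_zero_of_natDegree_lt (hdeg.trans_lt hk)
  have hrefl_zero {k : ℕ} (hk : 2 < k) : (conjReflect 2 P).coeff k = 0 :=
    coeff_eq_zero_of_natDegree_lt ((natDegree_conjReflect_le hdeg).trans_lt hk)
  constructor
  · simpa [pentadiagonalSymbol, coeff_mul, Finset.Nat.antidiagonal_succ, coeff_conjReflect_of_le,
      hP_zero, hrefl_zero, coeff_X, coeff_C] using congrArg (coeff · 3) hP
  · simpa [pentadiagonalSymbol, coeff_mul, Finset.Nat.antidiagonal_succ, coeff_conjReflect_of_le,
      hP_zero, hrefl_zero, coeff_X, coeff_C] using congrArg (coeff · 4) hP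

theorem pentadiagonal_coeff_one_eq {c₀ : ℝ} {c₁ c₂ : ℂ} (h₁ : q₁ = c₁ * c₀ + c₂ * conj c₁)
    (h₂ : q₂ = c₂ * c₀) (hne : c₀ ^ 4 ≠ ‖q₂‖ ^ 2) :
    c₁ = c₀ * (c₀ ^ 2 * q₁ - q₂ * conj q₁) / (c₀ ^ 4 - (‖q₂‖ : ℂ) ^ 2) := by
  have hne' : (c₀ : ℂ) ^ 4 - (‖q₂‖ : ℂ) ^ 2 ≠ 0 := sub_ne_zero.2 (by exact_mod_cast hne)
  rw [eq_div_iff hne', ← Complex.mul_conj', h₁, h₂]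
  simp only [map_add, map_mul, Complex.conj_conj, Complex.conj_ofReal]
  ring

end Pentadiagonal

/-- pentadiagonal case: for a strictly positive weight
`φ(t) = 1 + 2 Re(q₁ e^{2πit}) + 2 Re(q₂ e^{4πit})` with `c₀ = exp((1/2)∫₀¹ log φ)` and
`c₀⁴ ≠ |q₂|²`, the Szegő function is the quadratic polynomial `c₀ + c₁ z + c₂ z²` with
`c₁ = c₀ (c₀² q₁ − q₂ conj(q₁))/(c₀⁴ − |q₂|²)` and `c₂ = q₂/c₀`. -/
theorem szego_function_pentadiagonal (q₁ q₂ : ℂ) (φ : ℝ → ℝ)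
    (hφ : ∀ t : ℝ, φ t = 1 + 2 * (q₁ * circlePt t).re + 2 * (q₂ * circlePt t ^ 2).re)
    (hpos : ∀ t ∈ Set.Icc (0:ℝ) 1, 0 < φ t)
    (c₀ : ℝ) (hc₀ : c₀ = Real.exp ((1/2) * ∫ t in (0:ℝ)..1, Real.log (φ t)))
    (hne : c₀ ^ 4 ≠ ‖q₂‖ ^ 2) :
    ∀ z : ℂ, ‖z‖ < 1 →
      Complex.exp ((1/2 : ℂ) * ∫ t in (0:ℝ)..1,
          ((circlePt t + z) / (circlePt t - z)) * (Real.log (φ t) : ℂ)) =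
        (c₀ : ℂ) +
          ((c₀ : ℂ) * ((c₀ : ℂ) ^ 2 * q₁ - q₂ * conj q₁) /
            ((c₀ : ℂ) ^ 4 - (‖q₂‖ : ℂ) ^ 2)) * z +
          (q₂ / (c₀ : ℂ)) * z ^ 2 := by
  intro z hz
  have hposCircle (w : ℂ) (hw : ‖w‖ = 1) : 0 < 1 + 2 * (q₁ * w).re + 2 * (q₂ * w ^ 2).re := by
    obtain ⟨t, ht, rfl⟩ := exists_mem_Ico_circlePt_eq hw
    exact hφ t ▸ hpos t (Set.Ico_subset_Icc_self ht)
  have hφQ (t : ℝ) :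
      (φ t : ℂ) = (pentadiagonalSymbol q₁ q₂).eval (circlePt t) / circlePt t ^ 2 := by
    rw [eval_pentadiagonalSymbol_div_sq (norm_circlePt t), hφ t]
  obtain ⟨P, hdeg, hP, hszego⟩ :=
    (isPositiveSymbol_pentadiagonalSymbol hposCircle).exists_szegoFunction_eq_eval hφQ
  have hP₀ : P.coeff 0 = c₀ := by
    rw [P.coeff_zero_eq_eval_zero, ← hszego 0 (by simp), szegoFunction_zero, hc₀]
  obtain ⟨hq₁, hq₂⟩ := coeff_of_pentadiagonalSymbol_eq hdeg hP
  rw [hP₀, Complex.conj_ofReal] at hq₁ hq₂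
  have hc₀_ne_zero : (c₀ : ℂ) ≠ 0 := by exact_mod_cast hc₀ ▸ (Real.exp_pos _).ne'
  change szegoFunction φ z = _
  rw [hszego z hz, Polynomial.eval_eq_sum_range' (Nat.lt_succ_of_le hdeg),
    ← pentadiagonal_coeff_one_eq hq₁ hq₂ hne, ← eq_div_of_mul_eq hc₀_ne_zero hq₂.symm]
  simp [Finset.sum_range_succ, hP₀]
end

section
/- (Spectral density of fractional Gaussian noise.) Let H ∈ (0,1), H ≠ 1/2, and set C(H) = −ζ(−2H)/(2ζ(1+2H)), where ζ is the Riemann zeta function (understood via analytic continuation). Define φ_H(t) = 4 C(H) sin²(πt) (ζ(2H+1, t) + ζ(2H+1, 1−t)) for 0 < t < 1, where ζ(s, x) is the Hurwitz zeta function. Then for every integer k, ∫₀¹ e^{2πikt} φ_H(t) dt = (1/2)|k+1|^{2H} + (1/2)|k−1|^{2H} − |k|^{2H}. In particular ∫₀¹ φ_H(t) dt = 1 and φ_H is the spectral density of the covariance sequence of fractional Gaussian noise with Hurst index H. -/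
open MeasureTheory Complex Filter ComplexConjugate

/-- Hurwitz zeta function `ζ(s, x) = Σ_{n=0}^∞ (n + x)^{−s}` (convergent for s > 1, x ∈ (0,1]). -/
noncomputable def hurwitzZetaSum (s x : ℝ) : ℝ := ∑' n : ℕ, ((n : ℝ) + x) ^ (-s)

/-!
On `[0, 1]` the function `φ_H` is the periodization of `C(H) (2 sin πt)² |t|^(-2H-1)`, so its Fourier
coefficients are the values at the integers of the Fourier transform of that function on `ℝ`. There
the factor `(2 sin πt)²` is a second difference in the frequency variable, applied to
`∫ (1 - cos xt) |t|^(-p-1) dt = |x|^p π / (sin(πp/2) Γ(p+1))` with `p = 2H`, which follows from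
Tonelli's theorem once `|t|^(-p-1)` is written as a Laplace integral. Up to powers of `2π` the
constant here is the reciprocal of the one in the functional equation of `ζ`, which is how `C(H)`
normalizes the result.
-/

section

open Set
open scoped Real

section Tonelli

variable {α β : Type*} [MeasurableSpace α] [MeasurableSpace β] {μ : Measure α} {ν : Measure β}

theorem lintegral_ofReal_eq_ofReal_integral {f : α → ℝ} (hf : 0 ≤ᵐ[μ] f) (h : ∫ a, f a ∂μ ≠ 0) :
    ∫⁻ a, ENNReal.ofReal (f a) ∂μ = ENNReal.ofReal (∫ a, f a ∂μ) :=
  (ofReal_integral_eq_lintegral_ofReal (.of_integral_ne_zero h) hf).symm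

theorem lintegral_ofReal_const_mul_eq {f : α → ℝ} {c I : ℝ} (hc : 0 ≤ c)
    (h : ∫⁻ a, ENNReal.ofReal (f a) ∂μ = ENNReal.ofReal I) :
    ∫⁻ a, ENNReal.ofReal (c * f a) ∂μ = ENNReal.ofReal (c * I) := by
  simp_rw [ENNReal.ofReal_mul hc]
  rw [lintegral_const_mul' _ _ ENNReal.ofReal_ne_top, h]

theorem lintegral_ofReal_marginals_eq [SFinite μ] [SFinite ν] {K : α → β → ℝ}
    (hK : Measurable (Function.uncurry K)) {f : α → ℝ} {g : β → ℝ}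
    (hf : ∀ᵐ a ∂μ, ∫⁻ b, ENNReal.ofReal (K a b) ∂ν = ENNReal.ofReal (f a))
    (hg : ∀ᵐ b ∂ν, ∫⁻ a, ENNReal.ofReal (K a b) ∂μ = ENNReal.ofReal (g b)) :
    ∫⁻ a, ENNReal.ofReal (f a) ∂μ = ∫⁻ b, ENNReal.ofReal (g b) ∂ν :=
  calc
    _ = ∫⁻ a, ∫⁻ b, ENNReal.ofReal (K a b) ∂ν ∂μ := lintegral_congr_ae (hf.mono fun _ h => h.symm)
    _ = ∫⁻ b, ∫⁻ a, ENNReal.ofReal (K a b) ∂μ ∂ν :=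
      lintegral_lintegral_swap hK.ennreal_ofReal.aemeasurable
    _ = _ := lintegral_congr_ae hg

end Tonelli

theorem lintegral_rpow_mul_exp_neg_mul_rpow {p q b : ℝ} (hp : 0 < p) (hq : 0 < q) (hb : 0 < b) :
    ∫⁻ s in Ioi (0 : ℝ), ENNReal.ofReal (s ^ (q - 1) * Real.exp (-(b * s ^ p))) =
      ENNReal.ofReal (b ^ (-(q / p)) * (Real.Gamma (q / p) / p)) := by
  have hint : ∫ s in Ioi (0 : ℝ), s ^ (q - 1) * Real.exp (-(b * s ^ p)) =
      b ^ (-(q / p)) * (Real.Gamma (q / p) / p) := by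
    have h := integral_rpow_mul_exp_neg_mul_rpow hp (q := q - 1) (by linarith) hb
    simp only [neg_mul, sub_add_cancel] at h
    rw [h, neg_div]
    ring
  rw [← hint]
  refine lintegral_ofReal_eq_ofReal_integral ?_ (by rw [hint]; positivity)
  filter_upwards [self_mem_ae_restrict measurableSet_Ioi] with s (hs : 0 < s)
  simp only [Pi.zero_apply]
  positivity

theorem lintegral_rpow_mul_exp_neg_mul {q b : ℝ} (hq : 0 < q) (hb : 0 < b) :
    ∫⁻ s in Ioi (0 : ℝ), ENNReal.ofReal (s ^ (q - 1) * Real.exp (-(b * s))) =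
      ENNReal.ofReal (b ^ (-q) * Real.Gamma q) := by
  simpa using lintegral_rpow_mul_exp_neg_mul_rpow one_pos hq hb

theorem lintegral_rpow_div_rpow_add {p q y : ℝ} (hq : 0 < q) (hqp : q < p) (hy : 0 < y) :
    ∫⁻ s in Ioi (0 : ℝ), ENNReal.ofReal (s ^ (q - 1) / (s ^ p + y)) =
      ENNReal.ofReal (y ^ (q / p - 1) * (π / (p * Real.sin (π * (q / p))))) := by
  have hp : 0 < p := hq.trans hqp
  have hqp' : 0 < 1 - q / p := sub_pos.2 ((div_lt_one hp).2 hqp)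
  let K (s v : ℝ) : ℝ := s ^ (q - 1) * Real.exp (-((s ^ p + y) * v))
  have inner_v : ∀ᵐ s ∂volume.restrict (Ioi (0 : ℝ)),
      ∫⁻ v in Ioi (0 : ℝ), ENNReal.ofReal (K s v) =
        ENNReal.ofReal (s ^ (q - 1) / (s ^ p + y)) := by
    filter_upwards [self_mem_ae_restrict measurableSet_Ioi] with s (hs : 0 < s)
    have h := lintegral_rpow_mul_exp_neg_mul one_pos (b := s ^ p + y) (by positivity)
    simp only [sub_self, Real.rpow_zero, one_mul, Real.rpow_neg_one, Real.Gamma_one, mul_one] at h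
    exact lintegral_ofReal_const_mul_eq (by positivity) h
  have inner_s : ∀ᵐ v ∂volume.restrict (Ioi (0 : ℝ)),
      ∫⁻ s in Ioi (0 : ℝ), ENNReal.ofReal (K s v) =
        ENNReal.ofReal (Real.Gamma (q / p) / p * (v ^ (1 - q / p - 1) * Real.exp (-(y * v)))) := by
    filter_upwards [self_mem_ae_restrict measurableSet_Ioi] with v (hv : 0 < v)
    have hK (s : ℝ) : K s v = Real.exp (-(y * v)) * (s ^ (q - 1) * Real.exp (-(v * s ^ p))) := by
      simp only [K]
      rw [show -((s ^ p + y) * v) = -(y * v) + -(v * s ^ p) by ring, Real.exp_add]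
      ring
    simp_rw [hK]
    rw [lintegral_ofReal_const_mul_eq (Real.exp_nonneg _)
      (lintegral_rpow_mul_exp_neg_mul_rpow hp hq hv), show 1 - q / p - 1 = -(q / p) by ring]
    congr 1
    ring
  rw [lintegral_ofReal_marginals_eq (by fun_prop) inner_v inner_s,
    lintegral_ofReal_const_mul_eq (by positivity) (lintegral_rpow_mul_exp_neg_mul hqp' hy)]
  congr 1
  calc
    _ = y ^ (q / p - 1) * (Real.Gamma (q / p) * Real.Gamma (1 - q / p) / p) := by
      rw [neg_sub]
      ring
    _ = _ := by rw [Real.Gamma_mul_Gamma_one_sub, div_div, mul_comm p]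

theorem integral_Ioi_one_sub_cos_mul_exp_neg_mul (x : ℝ) {s : ℝ} (hs : 0 < s) :
    ∫ t in Ioi (0 : ℝ), (1 - Real.cos (x * t)) * Real.exp (-(s * t)) =
      x ^ 2 / (s * (s ^ 2 + x ^ 2)) := by
  have h₁ : (-s : ℂ).re < 0 := by simpa
  have h₂ : (-(s - x * I) : ℂ).re < 0 := by simpa
  have i₁ := integrableOn_exp_mul_complex_Ioi h₁ 0
  have i₂ := integrableOn_exp_mul_complex_Ioi h₂ 0
  calc
    _ = ∫ t in Ioi (0 : ℝ),
        RCLike.re (Complex.exp (-s * t) - Complex.exp (-(s - x * I) * t)) := by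
      congr 1 with t
      simp [Complex.exp_re, one_sub_mul, mul_comm]
    _ = RCLike.re ((1 / s : ℂ) - 1 / (s - x * I)) := by
      rw [integral_re (i₁.fun_sub i₂), integral_sub i₁ i₂, integral_exp_mul_complex_Ioi h₁,
        integral_exp_mul_complex_Ioi h₂]
      simp only [Complex.ofReal_zero, mul_zero, Complex.exp_zero, neg_div_neg_eq]
    _ = _ := by
      have : s ^ 2 + x ^ 2 ≠ 0 := by positivity
      have hnormSq : Complex.normSq (s - x * I) = s ^ 2 + x ^ 2 := by
        simp [Complex.normSq_apply, sq]
      have hre : (s - x * I : ℂ).re = s := by simp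
      rw [RCLike.re_to_complex, one_div, one_div, Complex.sub_re, ← Complex.ofReal_inv,
        Complex.ofReal_re, Complex.inv_re, hnormSq, hre]
      field_simp
      ring

theorem integral_one_sub_cos_mul_exp_neg_mul_abs (x : ℝ) {s : ℝ} (hs : 0 < s) :
    ∫ t : ℝ, (1 - Real.cos (x * t)) * Real.exp (-(s * |t|)) =
      2 * (x ^ 2 / (s * (s ^ 2 + x ^ 2))) := by
  rw [← integral_Ioi_one_sub_cos_mul_exp_neg_mul x hs, ← integral_comp_abs]
  congr 1 with t
  rw [← Real.cos_abs (x * t), ← Real.cos_abs (x * |t|), abs_mul, abs_mul, abs_abs]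

theorem lintegral_one_sub_cos_mul_exp_neg_mul_abs (x : ℝ) {s : ℝ} (hs : 0 < s) :
    ∫⁻ t : ℝ, ENNReal.ofReal ((1 - Real.cos (x * t)) * Real.exp (-(s * |t|))) =
      ENNReal.ofReal (2 * (x ^ 2 / (s * (s ^ 2 + x ^ 2)))) := by
  rcases eq_or_ne x 0 with rfl | hx
  · simp
  have hint := integral_one_sub_cos_mul_exp_neg_mul_abs x hs
  rw [← hint]
  exact lintegral_ofReal_eq_ofReal_integral
    (.of_forall fun t => mul_nonneg (sub_nonneg.2 (Real.cos_le_one _)) (Real.exp_nonneg _))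
    (by rw [hint]; positivity)

theorem lintegral_one_sub_cos_mul_rpow_abs {p : ℝ} (hp : p ∈ Ioo (0 : ℝ) 2) (x : ℝ) :
    ∫⁻ t : ℝ, ENNReal.ofReal ((1 - Real.cos (x * t)) * |t| ^ (-(p + 1))) =
      ENNReal.ofReal (|x| ^ p * (π / (Real.sin (π * (p / 2)) * Real.Gamma (p + 1)))) := by
  obtain ⟨hp0, hp2⟩ := hp
  rcases eq_or_ne x 0 with rfl | hx
  · simp [hp0.ne']
  have hΓ : 0 < Real.Gamma (p + 1) := Real.Gamma_pos_of_pos (by positivity)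
  let K (t s : ℝ) : ℝ :=
    (1 - Real.cos (x * t)) / Real.Gamma (p + 1) * (s ^ (p + 1 - 1) * Real.exp (-(|t| * s)))
  have inner_s : ∀ᵐ t : ℝ, ∫⁻ s in Ioi (0 : ℝ), ENNReal.ofReal (K t s) =
      ENNReal.ofReal ((1 - Real.cos (x * t)) * |t| ^ (-(p + 1))) := by
    filter_upwards [compl_mem_ae_iff.2 (measure_singleton 0)] with t (ht : t ≠ 0)
    rw [lintegral_ofReal_const_mul_eq (div_nonneg (sub_nonneg.2 (Real.cos_le_one _)) hΓ.le)
      (lintegral_rpow_mul_exp_neg_mul (by linarith) (abs_pos.2 ht))]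
    congr 1
    field_simp
  have inner_t : ∀ᵐ s ∂volume.restrict (Ioi (0 : ℝ)), ∫⁻ t : ℝ, ENNReal.ofReal (K t s) =
      ENNReal.ofReal (2 * x ^ 2 / Real.Gamma (p + 1) * (s ^ (p - 1) / (s ^ (2 : ℝ) + x ^ 2))) := by
    filter_upwards [self_mem_ae_restrict measurableSet_Ioi] with s (hs : 0 < s)
    have hK (t : ℝ) : K t s = s ^ p / Real.Gamma (p + 1) *
        ((1 - Real.cos (x * t)) * Real.exp (-(s * |t|))) := by
      simp only [K, add_sub_cancel_right, mul_comm |t|]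
      ring
    simp_rw [hK]
    rw [lintegral_ofReal_const_mul_eq (by positivity)
      (lintegral_one_sub_cos_mul_exp_neg_mul_abs x hs), Real.rpow_two, Real.rpow_sub_one hs.ne']
    congr 1
    field_simp
  rw [lintegral_ofReal_marginals_eq (by fun_prop) inner_s inner_t, lintegral_ofReal_const_mul_eq
    (by positivity) (lintegral_rpow_div_rpow_add hp0 hp2 (by positivity))]
  congr 1
  have hpow : x ^ 2 * (x ^ 2) ^ (p / 2 - 1) = |x| ^ p := by
    rw [Real.rpow_sub_one (by positivity), mul_div_cancel₀ _ (by positivity), ← sq_abs,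
      ← Real.rpow_natCast_mul (abs_nonneg x)]
    rw [Nat.cast_ofNat, mul_div_cancel₀ p two_ne_zero]
  rw [← hpow]
  field_simp

theorem sin_pi_mul_div_two_pos {p : ℝ} (hp : p ∈ Ioo (0 : ℝ) 2) : 0 < Real.sin (π * (p / 2)) :=
  Real.sin_pos_of_pos_of_lt_pi (by have := hp.1; positivity)
    (mul_lt_of_lt_one_right Real.pi_pos (by linarith [hp.2]))

theorem one_sub_cos_mul_rpow_abs_nonneg (p x t : ℝ) :
    0 ≤ (1 - Real.cos (x * t)) * |t| ^ (-(p + 1)) :=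
  mul_nonneg (sub_nonneg.2 (Real.cos_le_one _)) (by positivity)

theorem integrable_one_sub_cos_mul_rpow_abs {p : ℝ} (hp : p ∈ Ioo (0 : ℝ) 2) (x : ℝ) :
    Integrable fun t : ℝ => (1 - Real.cos (x * t)) * |t| ^ (-(p + 1)) :=
  (lintegral_ofReal_ne_top_iff_integrable (Measurable.aestronglyMeasurable (by fun_prop))
    (.of_forall (one_sub_cos_mul_rpow_abs_nonneg p x))).1
    (lintegral_one_sub_cos_mul_rpow_abs hp x ▸ ENNReal.ofReal_ne_top)

theorem integral_one_sub_cos_mul_rpow_abs {p : ℝ} (hp : p ∈ Ioo (0 : ℝ) 2) (x : ℝ) :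
    ∫ t : ℝ, (1 - Real.cos (x * t)) * |t| ^ (-(p + 1)) =
      |x| ^ p * (π / (Real.sin (π * (p / 2)) * Real.Gamma (p + 1))) := by
  have hΓ : 0 < Real.Gamma (p + 1) := Real.Gamma_pos_of_pos (by linarith [hp.1])
  have hsin := sin_pi_mul_div_two_pos hp
  rw [integral_eq_lintegral_of_nonneg_ae (.of_forall (one_sub_cos_mul_rpow_abs_nonneg p x))
    (integrable_one_sub_cos_mul_rpow_abs hp x).1, lintegral_one_sub_cos_mul_rpow_abs hp,
    ENNReal.toReal_ofReal (by positivity)]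

/-- The spectral density `(2 sin πt)² |t|^(-(p+1))`, `t ∈ ℝ`, of the unit increments of fractional
Brownian motion in continuous time, with `p = 2H` and up to a constant factor. -/
noncomputable def incrementSpectrum (p t : ℝ) : ℝ :=
  4 * Real.sin (π * t) ^ 2 * |t| ^ (-(p + 1))

theorem incrementSpectrum_even (p : ℝ) : (incrementSpectrum p).Even := fun t => by
  simp [incrementSpectrum]

theorem cos_mul_incrementSpectrum (p x t : ℝ) :
    Real.cos (2 * π * x * t) * incrementSpectrum p t =
      (1 - Real.cos (2 * π * (x + 1) * t)) * |t| ^ (-(p + 1)) +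
        (1 - Real.cos (2 * π * (x - 1) * t)) * |t| ^ (-(p + 1)) -
        2 * ((1 - Real.cos (2 * π * x * t)) * |t| ^ (-(p + 1))) := by
  rw [incrementSpectrum,
    show 2 * π * (x + 1) * t = 2 * π * x * t + 2 * (π * t) by ring,
    show 2 * π * (x - 1) * t = 2 * π * x * t - 2 * (π * t) by ring,
    Real.cos_add, Real.cos_sub, Real.cos_two_mul, Real.cos_sq' (π * t)]
  ring

theorem integrable_incrementSpectrum {p : ℝ} (hp : p ∈ Ioo (0 : ℝ) 2) :
    Integrable (incrementSpectrum p) := by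
  have h := (integrable_one_sub_cos_mul_rpow_abs hp (2 * π)).const_mul 2
  refine h.congr (.of_forall fun t => ?_)
  simp only [incrementSpectrum, mul_assoc 2 π, Real.cos_two_mul, Real.cos_sq']
  ring

theorem integral_cos_mul_incrementSpectrum {p : ℝ} (hp : p ∈ Ioo (0 : ℝ) 2) (x : ℝ) :
    ∫ t : ℝ, Real.cos (2 * π * x * t) * incrementSpectrum p t =
      (2 * π) ^ p * (π / (Real.sin (π * (p / 2)) * Real.Gamma (p + 1))) *
        (|x + 1| ^ p + |x - 1| ^ p - 2 * |x| ^ p) := by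
  have hi (y : ℝ) := integrable_one_sub_cos_mul_rpow_abs hp (2 * π * y)
  have hscale (y : ℝ) : |2 * π * y| ^ p = (2 * π) ^ p * |y| ^ p := by
    rw [abs_mul, abs_of_pos Real.two_pi_pos, Real.mul_rpow Real.two_pi_pos.le (abs_nonneg y)]
  simp_rw [cos_mul_incrementSpectrum]
  rw [integral_sub ((hi (x + 1)).fun_add (hi (x - 1))) ((hi x).const_mul 2),
    integral_add (hi (x + 1)) (hi (x - 1)), integral_const_mul]
  simp_rw [integral_one_sub_cos_mul_rpow_abs hp, hscale]
  ring

theorem integral_exp_mul_I_mul_of_even {f : ℝ → ℝ} (hf : Integrable f) (heven : f.Even) (x : ℝ) :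
    ∫ t : ℝ, Complex.exp ((x * t : ℝ) * I) * (f t : ℂ) =
      ((∫ t : ℝ, Real.cos (x * t) * f t : ℝ) : ℂ) := by
  have hcos : Integrable fun t => Real.cos (x * t) * f t :=
    hf.bdd_mul (c := 1) (by fun_prop) (.of_forall fun t => Real.abs_cos_le_one _)
  have hsin : Integrable fun t => Real.sin (x * t) * f t :=
    hf.bdd_mul (c := 1) (by fun_prop) (.of_forall fun t => Real.abs_sin_le_one _)
  have hodd : ∫ t : ℝ, Real.sin (x * t) * f t = 0 := by
    refine self_eq_neg.1 ?_
    rw [← integral_neg, ← integral_neg_eq_self]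
    simp [heven _]
  have hcos' : Integrable fun t => ((Real.cos (x * t) * f t : ℝ) : ℂ) := hcos.ofReal
  have hsin' : Integrable fun t => ((Real.sin (x * t) * f t : ℝ) : ℂ) * I :=
    hsin.ofReal.mul_const I
  calc
    _ = ∫ t : ℝ, ((Real.cos (x * t) * f t : ℝ) : ℂ) + ((Real.sin (x * t) * f t : ℝ) : ℂ) * I := by
      congr 1 with t
      rw [Complex.exp_mul_I]
      push_cast
      ring
    _ = _ := by
      rw [integral_add hcos' hsin', integral_mul_const,
        integral_complex_ofReal, integral_complex_ofReal, hodd]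
      simp

theorem intervalIntegral_tsum_comp_add_int {E : Type*} [NormedAddCommGroup E] [NormedSpace ℝ E]
    {f : ℝ → E} (hf : Integrable f) :
    ∫ t in (0 : ℝ)..1, ∑' n : ℤ, f (t + n) = ∫ t, f t := by
  have hterm (n : ℤ) : Integrable (fun t => f (t + n)) (volume.restrict (Ioc (0 : ℝ) 1)) :=
    (hf.comp_add_right (n : ℝ)).restrict
  have hnorm := hf.norm.hasSum_intervalIntegral_comp_add_int.summable
  have hsum := hf.hasSum_intervalIntegral_comp_add_int
  simp only [intervalIntegral.integral_of_le zero_le_one] at hnorm hsum ⊢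
  exact (hasSum_integral_of_summable_integral_norm hterm hnorm).unique hsum

theorem toeplitzCoeff_tsum_comp_add_int {f : ℝ → ℝ} (hf : Integrable f) (k : ℤ) :
    toeplitzCoeff (fun t => ∑' n : ℤ, f (t + n)) k =
      ∫ t : ℝ, Complex.exp ((2 * π * k * t : ℝ) * I) * (f t : ℂ) := by
  have hperiodic (t : ℝ) (n : ℤ) : Complex.exp ((2 * π * k * (t + n) : ℝ) * I) =
      Complex.exp ((2 * π * k * t : ℝ) * I) := by
    rw [← Complex.exp_periodic.int_mul (k * n) ((2 * π * k * t : ℝ) * I)]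
    congr 1
    push_cast
    ring
  have hint : Integrable fun t : ℝ => Complex.exp ((2 * π * k * t : ℝ) * I) * (f t : ℂ) :=
    hf.ofReal.bdd_mul (c := 1) (by fun_prop)
      (.of_forall fun t => (Complex.norm_exp_ofReal_mul_I _).le)
  rw [← intervalIntegral_tsum_comp_add_int hint, toeplitzCoeff]
  simp_rw [hperiodic, tsum_mul_left, Complex.ofReal_tsum]

theorem toeplitzCoeff_tsum_incrementSpectrum {p : ℝ} (hp : p ∈ Ioo (0 : ℝ) 2) (k : ℤ) :
    toeplitzCoeff (fun t => ∑' n : ℤ, incrementSpectrum p (t + n)) k =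
      ((2 * π) ^ p * (π / (Real.sin (π * (p / 2)) * Real.Gamma (p + 1))) *
        (|(k : ℝ) + 1| ^ p + |(k : ℝ) - 1| ^ p - 2 * |(k : ℝ)| ^ p) : ℝ) := by
  have hi := integrable_incrementSpectrum hp
  rw [toeplitzCoeff_tsum_comp_add_int hi, integral_exp_mul_I_mul_of_even hi
    (incrementSpectrum_even p), integral_cos_mul_incrementSpectrum hp]

theorem toeplitzCoeff_zero (φ : ℝ → ℝ) :
    toeplitzCoeff φ 0 = ((∫ t in (0 : ℝ)..1, φ t : ℝ) : ℂ) := by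
  simp [toeplitzCoeff, intervalIntegral.integral_ofReal]

theorem toeplitzCoeff_const_mul (c : ℝ) (φ : ℝ → ℝ) (k : ℤ) :
    toeplitzCoeff (fun t => c * φ t) k = c * toeplitzCoeff φ k := by
  simp_rw [toeplitzCoeff, Complex.ofReal_mul, mul_left_comm _ (c : ℂ)]
  exact intervalIntegral.integral_const_mul _ _

theorem toeplitzCoeff_congr {φ ψ : ℝ → ℝ} (h : EqOn φ ψ (Icc 0 1)) (k : ℤ) :
    toeplitzCoeff φ k = toeplitzCoeff ψ k := by
  refine intervalIntegral.integral_congr fun t ht => ?_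
  rw [uIcc_of_le zero_le_one] at ht
  simp only [h ht]

theorem hasSum_hurwitzZetaSum {s x : ℝ} (hs : 1 < s) (hx : 0 ≤ x) :
    HasSum (fun n : ℕ => ((n : ℝ) + x) ^ (-s)) (hurwitzZetaSum s x) := by
  refine Summable.hasSum (((Real.summable_one_div_nat_add_rpow x s).2 hs).congr fun n => ?_)
  have hn : 0 ≤ (n : ℝ) + x := by positivity
  rw [abs_of_nonneg hn, Real.rpow_neg hn, one_div]

theorem hasSum_int_rpow_abs_add {s t : ℝ} (hs : 1 < s) (ht : t ∈ Icc (0 : ℝ) 1) :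
    HasSum (fun n : ℤ => |t + n| ^ (-s)) (hurwitzZetaSum s t + hurwitzZetaSum s (1 - t)) := by
  obtain ⟨ht0, ht1⟩ := ht
  refine HasSum.of_nat_of_neg_add_one
    ((hasSum_hurwitzZetaSum hs ht0).congr_fun fun n => ?_)
    ((hasSum_hurwitzZetaSum hs (sub_nonneg.2 ht1)).congr_fun fun n => ?_)
  · rw [Int.cast_natCast, add_comm, abs_of_nonneg (by positivity)]
  · have : 0 ≤ (n : ℝ) := n.cast_nonneg
    push_cast
    rw [abs_of_nonpos (by linarith)]
    ring_nf

theorem tsum_incrementSpectrum_add_int {p t : ℝ} (hp : 0 < p) (ht : t ∈ Icc (0 : ℝ) 1) :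
    ∑' n : ℤ, incrementSpectrum p (t + n) = 4 * Real.sin (π * t) ^ 2 *
      (hurwitzZetaSum (p + 1) t + hurwitzZetaSum (p + 1) (1 - t)) := by
  have hsin (n : ℤ) : Real.sin (π * (t + n)) ^ 2 = Real.sin (π * t) ^ 2 := by
    rw [mul_add, mul_comm π n, Real.sin_add_int_mul_pi, mul_pow, ← zpow_natCast, ← zpow_mul]
    simp [zpow_mul']
  simp_rw [incrementSpectrum, hsin, tsum_mul_left]
  rw [(hasSum_int_rpow_abs_add (by linarith) ht).tsum_eq]

theorem neg_riemannZeta_neg_div {s : ℂ} (hs : 0 < s.re) :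
    -riemannZeta (-s) / (2 * riemannZeta (1 + s)) =
      (2 * π) ^ (-(s + 1)) * Complex.Gamma (s + 1) * Complex.sin (π * (s / 2)) := by
  have hζ : riemannZeta (1 + s) ≠ 0 := riemannZeta_ne_zero_of_one_lt_re (by simpa using hs)
  have hpole (n : ℕ) : 1 + s ≠ -n := fun h => by
    have := congrArg Complex.re h
    simp only [Complex.add_re, Complex.one_re, Complex.neg_re, Complex.natCast_re] at this
    linarith [n.cast_nonneg (α := ℝ)]
  have hone : 1 + s ≠ 1 := fun h => by simp_all
  have hcos : Complex.cos (π * (1 + s) / 2) = -Complex.sin (π * (s / 2)) := by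
    rw [← Complex.cos_add_pi_div_two]
    ring_nf
  have hfe := riemannZeta_one_sub hpole hone
  rw [sub_add_cancel_left, hcos] at hfe
  rw [hfe, div_eq_iff (by simpa using hζ), add_comm s]
  ring

theorem neg_riemannZeta_neg_div_ofReal {p : ℝ} (hp : 0 < p) :
    -riemannZeta (-p) / (2 * riemannZeta (1 + p)) =
      ((2 * π) ^ (-(p + 1)) * Real.Gamma (p + 1) * Real.sin (π * (p / 2)) : ℝ) := by
  rw [neg_riemannZeta_neg_div (by simpa using hp)]
  push_cast [Complex.ofReal_cpow Real.two_pi_pos.le, ← Complex.Gamma_ofReal]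
  rfl

theorem mul_eq_half_of_eq_neg_riemannZeta_neg_div {p C : ℝ} (hp : p ∈ Ioo (0 : ℝ) 2)
    (hC : (C : ℂ) = -riemannZeta (-p) / (2 * riemannZeta (1 + p))) :
    C * ((2 * π) ^ p * (π / (Real.sin (π * (p / 2)) * Real.Gamma (p + 1)))) = 1 / 2 := by
  have hsin := (sin_pi_mul_div_two_pos hp).ne'
  have hΓ : Real.Gamma (p + 1) ≠ 0 := (Real.Gamma_pos_of_pos (by linarith [hp.1])).ne'
  rw [Complex.ofReal_injective (hC.trans (neg_riemannZeta_neg_div_ofReal hp.1)),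
    Real.rpow_neg (by positivity), Real.rpow_add_one (by positivity)]
  generalize Real.sin (π * (p / 2)) = σ at hsin
  field_simp

end

/-- spectral density of fractional Gaussian noise: with
`C(H) = −ζ(−2H)/(2ζ(1+2H))` and
`φ_H(t) = 4 C(H) sin²(πt) (ζ(2H+1, t) + ζ(2H+1, 1−t))`, one has
`∫₀¹ e^{2πikt} φ_H(t) dt = (1/2)|k+1|^{2H} + (1/2)|k−1|^{2H} − |k|^{2H}` for every k ∈ ℤ;
in particular `∫₀¹ φ_H = 1`. -/
theorem fgn_spectral_density (H : ℝ) (hH : H ∈ Set.Ioo (0:ℝ) 1) (hH' : H ≠ 1/2)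
    (C : ℝ) (hC : (C : ℂ) = -riemannZeta (-(2 * (H : ℂ))) / (2 * riemannZeta (1 + 2 * (H : ℂ))))
    (φH : ℝ → ℝ)
    (hφH : ∀ t : ℝ, φH t = 4 * C * Real.sin (Real.pi * t) ^ 2 *
      (hurwitzZetaSum (2 * H + 1) t + hurwitzZetaSum (2 * H + 1) (1 - t))) :
    (∀ k : ℤ,
      ∫ t in (0:ℝ)..1,
          Complex.exp (((2 * Real.pi * (k : ℝ) * t : ℝ) : ℂ) * Complex.I) * (φH t : ℂ) =
        (((1/2) * |(k : ℝ) + 1| ^ (2 * H) + (1/2) * |(k : ℝ) - 1| ^ (2 * H)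
            - |(k : ℝ)| ^ (2 * H) : ℝ) : ℂ)) ∧
    ∫ t in (0:ℝ)..1, φH t = 1 := by
  have hp : 2 * H ∈ Set.Ioo (0 : ℝ) 2 := ⟨by linarith [hH.1], by linarith [hH.2]⟩
  have normalization := mul_eq_half_of_eq_neg_riemannZeta_neg_div (C := C) hp (by simpa using hC)
  have periodization : Set.EqOn φH (fun t => C * ∑' n : ℤ, incrementSpectrum (2 * H) (t + n))
      (Set.Icc 0 1) := fun t ht => by
    simp only [hφH, tsum_incrementSpectrum_add_int hp.1 ht]
    ring
  have coeff (k : ℤ) : toeplitzCoeff φH k = ((1 / 2 * |(k : ℝ) + 1| ^ (2 * H) +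
      1 / 2 * |(k : ℝ) - 1| ^ (2 * H) - |(k : ℝ)| ^ (2 * H) : ℝ) : ℂ) := by
    rw [toeplitzCoeff_congr periodization, toeplitzCoeff_const_mul,
      toeplitzCoeff_tsum_incrementSpectrum hp, ← Complex.ofReal_mul, ← mul_assoc, normalization]
    congr 1
    ring
  refine ⟨coeff, Complex.ofReal_injective ?_⟩
  rw [← toeplitzCoeff_zero, coeff]
  norm_num [Real.zero_rpow hp.1.ne']
end
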